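/- Let n = qp^k with p, q distinct odd primes and k ≥ 2, and let n' = np. Suppose U_n = ⟨x⟩ × ⟨y⟩ × ⟨z⟩ is an internal direct product where ord_{p^k}(x) is divisible by p but ord_{p^k}(y) and ord_{p^k}(z) are not. Then there exist lifts x', y', z' ∈ U_{n'} (elements reducing to x, y, z mod n) with ord_{n'}(y') = ord_n(y), ord_{n'}(z') = ord_n(z), ord_{n'}(x') = p·ord_n(x), and U_{n'} = ⟨x'⟩ × ⟨y'⟩ × ⟨z'⟩. -/

import Mathlib

/-- `G` is the internal direct product of the cyclic subgroups generated by `x`, `y`, `z`: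
the multiplication map from the product of the three subgroups is a bijection onto `G`. -/
def IsDirectProd3 {G : Type*} [Group G] (x y z : G) : Prop :=
  Function.Bijective
    (fun p : (Subgroup.zpowers x) × (Subgroup.zpowers y) × (Subgroup.zpowers z) =>
      (p.1 : G) * (p.2.1 : G) * (p.2.2 : G))

section

variable {G : Type*} [CommGroup G] {x y z : G}

lemma IsDirectProd3.zpow_eq_one (h : IsDirectProd3 x y z) {i j l : ℤ}
    (hijl : x ^ i * y ^ j * z ^ l = 1) : x ^ i = 1 ∧ y ^ j = 1 ∧ z ^ l = 1 := by
  have := @h.1 (⟨x ^ i, i, rfl⟩, ⟨y ^ j, j, rfl⟩, ⟨z ^ l, l, rfl⟩) (1, 1, 1) (by simpa using hijl)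
  simpa [Prod.ext_iff, Subtype.ext_iff] using this

lemma IsDirectProd3.exists_zpow (h : IsDirectProd3 x y z) (g : G) :
    ∃ i j l : ℤ, x ^ i * y ^ j * z ^ l = g := by
  obtain ⟨⟨⟨_, i, rfl⟩, ⟨_, j, rfl⟩, ⟨_, l, rfl⟩⟩, hg⟩ := h.2 g
  exact ⟨i, j, l, hg⟩

lemma IsDirectProd3.card_eq (h : IsDirectProd3 x y z) :
    Nat.card G = orderOf x * (orderOf y * orderOf z) := by
  rw [← Nat.card_eq_of_bijective _ h, Nat.card_prod, Nat.card_prod, Nat.card_zpowers,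
    Nat.card_zpowers, Nat.card_zpowers]

lemma isDirectProd3_of_card_eq [Finite G] (h : ∀ g : G, ∃ i j l : ℤ, x ^ i * y ^ j * z ^ l = g)
    (hc : Nat.card G = orderOf x * (orderOf y * orderOf z)) : IsDirectProd3 x y z := by
  refine (Nat.bijective_iff_surjective_and_card _).2 ⟨fun g => ?_, ?_⟩
  · obtain ⟨i, j, l, hg⟩ := h g
    exact ⟨(⟨x ^ i, i, rfl⟩, ⟨y ^ j, j, rfl⟩, ⟨z ^ l, l, rfl⟩), hg⟩
  · rw [hc, Nat.card_prod, Nat.card_prod, Nat.card_zpowers, Nat.card_zpowers, Nat.card_zpowers]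

lemma zpow_eq_one_of_pow_prime_eq_one {p : ℕ} (hp : p.Prime) (hy : ¬ p ∣ orderOf y) {j : ℤ}
    (hj : (y ^ j) ^ p = 1) : y ^ j = 1 := by
  have h1 : orderOf (y ^ j) ∣ p := orderOf_dvd_of_pow_eq_one hj
  rcases (Nat.dvd_prime hp).1 h1 with h | h
  · exact orderOf_eq_one_iff.1 h
  · exact absurd (h ▸ orderOf_dvd_of_mem_zpowers ⟨j, rfl⟩) hy

lemma IsDirectProd3.mem_zpowers_of_pow_prime_eq_one (h : IsDirectProd3 x y z) {p : ℕ}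
    (hp : p.Prime) (hy : ¬ p ∣ orderOf y) (hz : ¬ p ∣ orderOf z) {e : G} (he : e ^ p = 1) :
    e ∈ Subgroup.zpowers x := by
  obtain ⟨i, j, l, rfl⟩ := h.exists_zpow e
  have h3 := h.zpow_eq_one (i := i * p) (j := j * p) (l := l * p)
    (by simpa [mul_pow, zpow_mul] using he)
  simp only [zpow_mul, zpow_natCast] at h3
  rw [zpow_eq_one_of_pow_prime_eq_one hp hy h3.2.1, zpow_eq_one_of_pow_prime_eq_one hp hz h3.2.2]
  exact ⟨i, by simp⟩

lemma IsCyclic.mem_of_pow_eq_one_of_card_eq [Finite G] [IsCyclic G] {p : ℕ} (hp : p.Prime) {H : Subgroup G}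
    (hH : Nat.card H = p) {e : G} (he : e ^ p = 1) : e ∈ H := by
  classical
  have := Fintype.ofFinite G
  have hsub : (Finset.univ.filter (· ∈ H)) ⊆ Finset.univ.filter (fun a : G => a ^ p = 1) := by
    intro a ha
    simp only [Finset.mem_filter, Finset.mem_univ, true_and] at ha ⊢
    rw [← hH]
    exact congrArg Subtype.val (pow_card_eq_one' (x := (⟨a, ha⟩ : H)))
  have hcard : (Finset.univ.filter (· ∈ H)).card = p := by
    rw [← hH, Nat.card_eq_fintype_card, Fintype.card_subtype]
  have := Finset.eq_of_subset_of_card_le hsub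
    (by rw [hcard]; exact IsCyclic.card_pow_eq_one_le hp.pos)
  have he' : e ∈ Finset.univ.filter (fun a : G => a ^ p = 1) := by simpa using he
  rw [← this] at he'
  simpa using he'

lemma orderOf_pow_div_prime [Finite G] {p : ℕ} (hy : p ∣ orderOf y) :
    orderOf (y ^ (orderOf y / p)) = p := by
  have h := orderOf_pos y
  rw [orderOf_pow_of_dvd (Nat.div_pos (Nat.le_of_dvd h hy) (Nat.pos_of_dvd_of_pos hy h)).ne'
    (Nat.div_dvd_of_dvd hy), Nat.div_div_self hy h.ne']

lemma dvd_div_prime_of_not_dvd {p a m : ℕ} (hp : p.Prime) (ha : ¬ p ∣ a) (ham : a ∣ m)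
    (hpm : p ∣ m) : a ∣ m / p :=
  ((Nat.Coprime.dvd_mul_left ((Nat.Prime.coprime_iff_not_dvd hp).2 ha).symm).1
    (by rwa [Nat.mul_div_cancel' hpm]))

end

section

variable {G A B : Type*} [CommGroup G] [CommGroup A] [CommGroup B]

lemma IsDirectProd3.not_prime_mul_orderOf_dvd [Finite G] [Finite A] [Finite B]
    [IsCyclic B] {x y z : G} (h : IsDirectProd3 x y z)
    {p : ℕ} (hp : p.Prime) (f : G →* A) (g : G →* B) (hfg : Function.Bijective (f.prod g))
    (hx : p ∣ orderOf (f x)) (hy : ¬ p ∣ orderOf (f y)) (hz : ¬ p ∣ orderOf (f z)) :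
    ¬ p * orderOf (f x) ∣ orderOf x := by
  intro hdvd
  have hpx : p ∣ orderOf x := (dvd_mul_right _ _).trans hdvd
  set e := x ^ (orderOf x / p) with he
  have heo : orderOf e = p := orderOf_pow_div_prime hpx
  have hfe : f e = 1 := by
    rw [he, map_pow]
    exact orderOf_dvd_iff_pow_eq_one.1 (Nat.dvd_div_of_mul_dvd hdvd)
  have hge : orderOf (g e) = p := by
    refine orderOf_eq_prime (hp := ⟨hp⟩) ?_ ?_
    · rw [← map_pow, ← heo, pow_orderOf_eq_one, map_one]
    · intro h1
      have : e = 1 := hfg.1 (by simp [hfe, h1])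
      rw [this, orderOf_one] at heo
      exact hp.one_lt.ne heo
  have key : ∀ w : G, ¬ p ∣ orderOf (f w) → p ∣ orderOf w →
      ∃ (i j : ℤ), w ^ j = x ^ i ∧ w ^ j ≠ 1 := by
    intro w hw hpw
    have hwo := orderOf_pow_div_prime hpw
    have hfw : f (w ^ (orderOf w / p)) = 1 := by
      rw [map_pow]
      exact orderOf_dvd_iff_pow_eq_one.1
        (dvd_div_prime_of_not_dvd hp hw (orderOf_map_dvd f w) hpw)
    obtain ⟨i, hi⟩ := IsCyclic.mem_of_pow_eq_one_of_card_eq hp (H := Subgroup.zpowers (g e))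
      (by rw [Nat.card_zpowers, hge]) (e := g (w ^ (orderOf w / p)))
      (by
        rw [← map_pow, orderOf_dvd_iff_pow_eq_one.1 hwo.dvd, map_one])
    have heq : w ^ (orderOf w / p) = e ^ i :=
      hfg.1 (by simp only [MonoidHom.prod_apply, hfw, map_zpow, hfe]; simpa using hi.symm)
    refine ⟨(orderOf x / p : ℕ) * i, (orderOf w / p : ℕ), ?_, ?_⟩
    · rw [zpow_natCast, heq, zpow_mul, zpow_natCast]
    · rw [zpow_natCast]
      intro h1
      rw [h1, orderOf_one] at hwo
      exact hp.one_lt.ne hwo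
  have hpy : ¬ p ∣ orderOf y := by
    intro hpy
    obtain ⟨i, j, hij, hne⟩ := key y hy hpy
    exact hne (h.zpow_eq_one (i := -i) (j := j) (l := 0) (by simp [hij])).2.1
  have hpz : ¬ p ∣ orderOf z := by
    intro hpz
    obtain ⟨i, j, hij, hne⟩ := key z hz hpz
    exact hne (h.zpow_eq_one (i := -i) (j := 0) (l := j) (by simp [hij])).2.2
  obtain ⟨t, ht⟩ := hfg.2 (f x ^ (orderOf (f x) / p), 1)
  have hto := orderOf_pow_div_prime hx
  have ht1 : f t = f x ^ (orderOf (f x) / p) := congrArg Prod.fst ht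
  have ht2 : g t = 1 := congrArg Prod.snd ht
  have htp : t ^ p = 1 := hfg.1 (by
    have h1 : (f x ^ (orderOf (f x) / p)) ^ p = 1 := orderOf_dvd_iff_pow_eq_one.1 hto.dvd
    simp [ht2, ht1, h1])
  obtain ⟨i, hi⟩ := h.mem_zpowers_of_pow_prime_eq_one hp hpy hpz htp
  have hdi : (orderOf x : ℤ) ∣ i * p := by
    rw [orderOf_dvd_iff_zpow_eq_one, zpow_mul, zpow_natCast]
    simpa [hi] using htp
  obtain ⟨c, hc⟩ := hpx
  have hci : (c : ℤ) ∣ i := by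
    rw [hc, mul_comm i] at hdi
    push_cast at hdi
    exact Int.dvd_of_mul_dvd_mul_left (by exact_mod_cast hp.ne_zero) hdi
  have hac : orderOf (f x) ∣ c := by
    rw [hc] at hdvd
    exact Nat.dvd_of_mul_dvd_mul_left hp.pos hdvd
  have hft : f t = 1 := by
    rw [← hi]
    simp only [map_zpow]
    exact orderOf_dvd_iff_zpow_eq_one.1 ((Int.natCast_dvd_natCast.2 hac).trans hci)
  rw [← ht1, hft, orderOf_one] at hto
  exact hp.one_lt.ne hto

variable {G' A' : Type*} [CommGroup G'] [CommGroup A']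

lemma card_ker_of_card_eq [Finite G] {p : ℕ} (π : G' →* G) (hπ : Function.Surjective π)
    (hc : Nat.card G' = p * Nat.card G) : Nat.card π.ker = p := by
  have h := π.ker.card_mul_index
  rw [Subgroup.index_ker, MonoidHom.range_eq_top.2 hπ, Subgroup.card_top, hc] at h
  exact Nat.eq_of_mul_eq_mul_right Nat.card_pos h

lemma prime_mul_orderOf_map_dvd [Finite A'] [IsCyclic A'] {p : ℕ} (hp : p.Prime) (ρ : A' →* A)
    (hρ : Nat.card ρ.ker = p) {w : A'} (hw : p ∣ orderOf (ρ w)) :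
    p * orderOf (ρ w) ∣ orderOf w := by
  have hpw : p ∣ orderOf w := hw.trans (orderOf_map_dvd ρ w)
  have h : w ^ (orderOf w / p) ∈ ρ.ker := IsCyclic.mem_of_pow_eq_one_of_card_eq hp hρ
    (by rw [← pow_mul, Nat.div_mul_cancel hpw, pow_orderOf_eq_one])
  rw [MonoidHom.mem_ker, map_pow] at h
  exact Nat.mul_dvd_of_dvd_div hpw (orderOf_dvd_of_pow_eq_one h)

lemma exists_lift_pow_orderOf_eq_one {p : ℕ} (hp : p.Prime) (ρ : A' →* A)
    (hρs : Function.Surjective ρ) (hρ : Nat.card ρ.ker = p) {a : A} (ha : ¬ p ∣ orderOf a) :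
    ∃ w, ρ w = a ∧ w ^ orderOf a = 1 := by
  obtain ⟨w, rfl⟩ := hρs a
  obtain ⟨c, hc1, hc2⟩ := Nat.chineseRemainder ((Nat.Prime.coprime_iff_not_dvd hp).2 ha).symm 1 0
  refine ⟨w ^ c, ?_, ?_⟩
  · rw [map_pow]
    simpa using pow_eq_pow_iff_modEq.2 hc1
  · obtain ⟨r, rfl⟩ := (Nat.modEq_zero_iff_dvd).1 hc2
    have hk : w ^ orderOf (ρ w) ∈ ρ.ker := by
      rw [MonoidHom.mem_ker, map_pow, pow_orderOf_eq_one]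
    have h1 : (w ^ orderOf (ρ w)) ^ p = 1 := by
      rw [← hρ]
      exact congrArg Subtype.val (pow_card_eq_one' (x := (⟨_, hk⟩ : ρ.ker)))
    rw [← pow_mul, show p * r * orderOf (ρ w) = orderOf (ρ w) * p * r by ring, pow_mul,
      pow_mul _ _ p, h1, one_pow]

lemma IsDirectProd3.exists_lift [Finite G] [Finite A] [Finite B] [Finite G']
    [Finite A'] [IsCyclic A'] [IsCyclic B] {x y z : G} (h : IsDirectProd3 x y z)
    {p : ℕ} (hp : p.Prime) (f : G →* A) (g : G →* B) (hfg : Function.Bijective (f.prod g))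
    (π : G' →* G) (ρ : A' →* A) (hρs : Function.Surjective ρ) (f' : G' →* A')
    (hfg' : Function.Bijective (f'.prod (g.comp π))) (hcomm : ∀ u, f (π u) = ρ (f' u))
    (hcard : Nat.card A' = p * Nat.card A)
    (hx : p ∣ orderOf (f x)) (hy : ¬ p ∣ orderOf (f y)) (hz : ¬ p ∣ orderOf (f z)) :
    ∃ x' y' z' : G', π x' = x ∧ π y' = y ∧ π z' = z ∧ orderOf x' = p * orderOf x ∧
      orderOf y' = orderOf y ∧ orderOf z' = orderOf z ∧ IsDirectProd3 x' y' z' := by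
  have hρ := card_ker_of_card_eq ρ hρs hcard
  have hlift : ∀ (v : G) (w : A'), ρ w = f v → ∃ v', π v' = v ∧ f' v' = w := by
    intro v w hw
    obtain ⟨v', hv'⟩ := hfg'.2 (w, g v)
    have h1 : f' v' = w := congrArg Prod.fst hv'
    have h2 : g (π v') = g v := congrArg Prod.snd hv'
    exact ⟨v', hfg.1 (by simp [hcomm, h1, hw, h2]), h1⟩
  have hπs : Function.Surjective π := fun v => by
    obtain ⟨w, hw⟩ := hρs (f v)
    obtain ⟨v', hv', -⟩ := hlift v w hw
    exact ⟨v', hv'⟩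
  have hspecial : ∀ v : G, ¬ p ∣ orderOf (f v) → ∃ v', π v' = v ∧ orderOf v' = orderOf v := by
    intro v hv
    obtain ⟨w, hw, hw1⟩ := exists_lift_pow_orderOf_eq_one hp ρ hρs hρ hv
    obtain ⟨v', hv', hfv'⟩ := hlift v w hw
    refine ⟨v', hv', Nat.dvd_antisymm (orderOf_dvd_of_pow_eq_one (hfg'.1 ?_))
      (by simpa [hv'] using orderOf_map_dvd π v')⟩
    obtain ⟨r, hr⟩ := orderOf_map_dvd f v
    have h1 : w ^ orderOf v = 1 := by rw [hr, pow_mul, hw1, one_pow]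
    simp [hfv', hv', h1]
  obtain ⟨x', hx'⟩ := hπs x
  obtain ⟨y', hy', hyo⟩ := hspecial y hy
  obtain ⟨z', hz', hzo⟩ := hspecial z hz
  have hcardG : Nat.card G' = p * Nat.card G := by
    rw [Nat.card_eq_of_bijective _ hfg', Nat.card_eq_of_bijective _ hfg, Nat.card_prod,
      Nat.card_prod, hcard, mul_assoc]
  have hπ := card_ker_of_card_eq π hπs hcardG
  have hker : x' ^ orderOf x ∈ π.ker := by
    rw [MonoidHom.mem_ker, map_pow, hx', pow_orderOf_eq_one]
  have hne : x' ^ orderOf x ≠ 1 := by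
    intro h1
    refine h.not_prime_mul_orderOf_dvd hp f g hfg hx hy hz ?_
    have h2 : f x = ρ (f' x') := by rw [← hcomm, hx']
    rw [h2] at hx ⊢
    refine (prime_mul_orderOf_map_dvd hp ρ hρ hx).trans (orderOf_dvd_of_pow_eq_one ?_)
    rw [← map_pow, h1, map_one]
  have hp1 : (x' ^ orderOf x) ^ p = 1 := by
    rw [← hπ]
    exact congrArg Subtype.val (pow_card_eq_one' (x := (⟨_, hker⟩ : π.ker)))
  have hpo : orderOf (x' ^ orderOf x) = p := orderOf_eq_prime (hp := ⟨hp⟩) hp1 hne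
  have hle : Subgroup.zpowers (x' ^ orderOf x) = π.ker :=
    Subgroup.eq_of_le_of_card_ge (by simpa using hker) (by rw [Nat.card_zpowers, hpo, hπ])
  have hxo : orderOf x' = p * orderOf x := by
    have hd : orderOf x ∣ orderOf x' := by simpa [hx'] using orderOf_map_dvd π x'
    rw [orderOf_pow_of_dvd (orderOf_pos x).ne' hd] at hpo
    rw [← hpo, Nat.div_mul_cancel hd]
  refine ⟨x', y', z', hx', hy', hz', hxo, hyo, hzo, isDirectProd3_of_card_eq (fun u => ?_) ?_⟩
  · obtain ⟨i, j, l, hu⟩ := h.exists_zpow (π u)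
    have hmem : u * (x' ^ i * y' ^ j * z' ^ l)⁻¹ ∈ π.ker := by
      rw [MonoidHom.mem_ker]
      simp only [map_mul, map_inv, map_zpow, hx', hy', hz', hu, mul_inv_cancel]
    rw [← hle] at hmem
    obtain ⟨c, hc⟩ := hmem
    refine ⟨orderOf x * c + i, j, l, ?_⟩
    have hc' : u = (x' ^ orderOf x) ^ c * (x' ^ i * y' ^ j * z' ^ l) := by
      rw [← mul_inv_eq_iff_eq_mul]
      exact hc.symm
    rw [hc', zpow_add, zpow_mul, zpow_natCast]
    simp only [mul_assoc]
  · rw [hcardG, h.card_eq, hxo, hyo, hzo, mul_assoc]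

end

lemma ZMod.unitsMap_prod_bijective {N a b : ℕ} [NeZero N] (ha : a ∣ N) (hb : b ∣ N) (hN : N = b * a)
    (hab : b.Coprime a) :
    Function.Bijective ((Units.map (ZMod.castHom ha (ZMod a)).toMonoidHom).prod
      (Units.map (ZMod.castHom hb (ZMod b)).toMonoidHom)) := by
  subst hN
  have : NeZero a := ⟨right_ne_zero_of_mul (NeZero.ne (b * a))⟩
  have : NeZero b := ⟨left_ne_zero_of_mul (NeZero.ne (b * a))⟩
  refine (Nat.bijective_iff_injective_and_card _).2 ⟨fun u v huv => Units.ext ?_, ?_⟩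
  · have h1 := congrArg (fun t => (t.1 : ZMod a)) huv
    have h2 := congrArg (fun t => (t.2 : ZMod b)) huv
    have h3 : (ZMod.castHom hb (ZMod b)).prod (ZMod.castHom ha (ZMod a)) =
        (ZMod.chineseRemainder hab : ZMod (b * a) →+* ZMod b × ZMod a) := Subsingleton.elim _ _
    apply (ZMod.chineseRemainder hab).injective
    have h4 := fun t => (DFunLike.congr_fun h3 t).symm
    simp only [RingHom.coe_coe] at h4
    rw [h4, h4]
    exact Prod.ext h2 h1
  · rw [Nat.card_prod]
    simp only [Nat.card_eq_fintype_card, ZMod.card_units_eq_totient]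
    rw [Nat.totient_mul hab, mul_comm]

theorem stmt16 (p q k : ℕ) (hp : p.Prime) (hq : q.Prime) (hpo : Odd p) (hqo : Odd q)
    (hpq : p ≠ q) (hk : 2 ≤ k)
    (x y z : (ZMod (q * p ^ k))ˣ) (hdp : IsDirectProd3 x y z)
    (hx : p ∣ orderOf
      (Units.map (ZMod.castHom (dvd_mul_left (p ^ k) q) (ZMod (p ^ k))).toMonoidHom x))
    (hy : ¬ p ∣ orderOf
      (Units.map (ZMod.castHom (dvd_mul_left (p ^ k) q) (ZMod (p ^ k))).toMonoidHom y))
    (hz : ¬ p ∣ orderOf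
      (Units.map (ZMod.castHom (dvd_mul_left (p ^ k) q) (ZMod (p ^ k))).toMonoidHom z)) :
    ∃ x' y' z' : (ZMod (q * p ^ k * p))ˣ,
      Units.map (ZMod.castHom (dvd_mul_right (q * p ^ k) p) (ZMod (q * p ^ k))).toMonoidHom x' = x ∧
      Units.map (ZMod.castHom (dvd_mul_right (q * p ^ k) p) (ZMod (q * p ^ k))).toMonoidHom y' = y ∧
      Units.map (ZMod.castHom (dvd_mul_right (q * p ^ k) p) (ZMod (q * p ^ k))).toMonoidHom z' = z ∧
      orderOf x' = p * orderOf x ∧ orderOf y' = orderOf y ∧ orderOf z' = orderOf z ∧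
      IsDirectProd3 x' y' z' := by
  have : Fact q.Prime := ⟨hq⟩
  have : Fact p.Prime := ⟨hp⟩
  have : NeZero (q * p ^ k) := ⟨(mul_pos hq.pos (pow_pos hp.pos k)).ne'⟩
  have : NeZero (q * p ^ k * p) := ⟨(mul_pos (mul_pos hq.pos (pow_pos hp.pos k)) hp.pos).ne'⟩
  have hcop : q.Coprime p := (Nat.coprime_primes hq hp).2 hpq.symm
  have : IsCyclic (ZMod (p ^ (k + 1)))ˣ :=
    ZMod.isCyclic_units_of_prime_pow p hp (by rintro rfl; exact absurd hpo (by decide)) (k + 1)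
  have hd : p ^ k ∣ p ^ (k + 1) := pow_dvd_pow p (Nat.le_succ k)
  have hN : q * p ^ k * p = q * p ^ (k + 1) := by ring
  refine hdp.exists_lift hp _
    (Units.map (ZMod.castHom (dvd_mul_right q (p ^ k)) (ZMod q)).toMonoidHom)
    (ZMod.unitsMap_prod_bijective _ _ rfl (hcop.pow_right k)) _
    (Units.map (ZMod.castHom hd (ZMod (p ^ k))).toMonoidHom)
    (ZMod.unitsMap_surjective hd)
    (Units.map (ZMod.castHom (hN ▸ dvd_mul_left _ q) (ZMod (p ^ (k + 1)))).toMonoidHom)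
    ?_ (fun u => Units.ext ?_) ?_ hx hy hz
  · have hq' : q ∣ q * p ^ k * p := (dvd_mul_right q (p ^ k)).trans (dvd_mul_right _ p)
    have hcomp : (Units.map (ZMod.castHom (dvd_mul_right q (p ^ k)) (ZMod q)).toMonoidHom).comp
        (Units.map (ZMod.castHom (dvd_mul_right (q * p ^ k) p) (ZMod (q * p ^ k))).toMonoidHom) =
        Units.map (ZMod.castHom hq' (ZMod q)).toMonoidHom :=
      MonoidHom.ext fun u => Units.ext <| DFunLike.congr_fun (Subsingleton.elim
        ((ZMod.castHom (dvd_mul_right q (p ^ k)) (ZMod q)).comp (ZMod.castHom _ _))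
        (ZMod.castHom hq' (ZMod q))) (u : ZMod (q * p ^ k * p))
    have hbij := ZMod.unitsMap_prod_bijective (hN ▸ dvd_mul_left _ q) hq' hN
      (hcop.pow_right (k + 1))
    rw [← hcomp] at hbij
    exact hbij
  · exact DFunLike.congr_fun (Subsingleton.elim
      ((ZMod.castHom (dvd_mul_left (p ^ k) q) (ZMod (p ^ k))).comp (ZMod.castHom _ _))
      ((ZMod.castHom hd (ZMod (p ^ k))).comp (ZMod.castHom _ _))) (u : ZMod (q * p ^ k * p))
  · simp only [Nat.card_eq_fintype_card, ZMod.card_units_eq_totient]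
    rw [Nat.totient_prime_pow_succ hp, Nat.totient_prime_pow hp (by omega)]
    rw [← mul_assoc, mul_pow_sub_one (by omega)]
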